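/- (Moore–Aronszajn, existence) Let X be a nonempty set and let K : X × X → ℝ be a kernel function, i.e. K(x,y) = K(y,x) for all x, y ∈ X and Σ_{i=1}^m Σ_{j=1}^m a_i a_j K(x_i, x_j) ≥ 0 for all m ≥ 1, a ∈ ℝ^m, x_1,…,x_m ∈ X. Then there exist a real Hilbert space H and a map φ : X → H such that K(x,y) = ⟪φ(y), φ(x)⟫_H for all x, y ∈ X and the linear span of {φ(x) : x ∈ X} is dense in H. -/

import Mathlib

open scoped RealInnerProductSpace

/-!
Letting each entry of a scalar kernel act on the scalar field by multiplication makes it a positive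
semidefinite matrix of operators, for which Mathlib's `RKHS.OfKernel` is a reproducing kernel
Hilbert space. The feature map sends `x` to the kernel function of `x` applied to `1`: the
reproducing property says that inner products of features are kernel values, and a vector
orthogonal to all features is a function vanishing at every point, so the features span densely.
-/

open Matrix

section PosSemidef

variable {n R : Type*} [Ring R] [PartialOrder R] [StarRing R]

theorem posSemidef_of_fin_sum_nonneg {M : Matrix n n R} (hM : M.IsHermitian)
    (hsum : ∀ m : ℕ, 1 ≤ m → ∀ (a : Fin m → R) (x : Fin m → n),
      0 ≤ ∑ i, ∑ j, star (a i) * M (x i) (x j) * a j) :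
    M.PosSemidef := by
  refine ⟨hM, fun f ↦ ?_⟩
  obtain rfl | hf := eq_or_ne f 0
  · simp
  let e := f.support.equivFin.symm
  have sum_support (g : n → R) : ∑ x ∈ f.support, g x = ∑ i, g (e i) := by
    rw [← Finset.sum_coe_sort, ← e.sum_comp]
  simpa only [Finsupp.sum, sum_support] using
    hsum f.support.card (Finset.card_pos.mpr (Finsupp.support_nonempty_iff.mpr hf))
      (fun i ↦ f (e i)) (fun i ↦ e i)

end PosSemidef

section ScalarKernel

open ContinuousLinearMap
open scoped ComplexOrder InnerProductSpace

variable {𝕜 X : Type*} [RCLike 𝕜]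

theorem adjoint_toSpanSingleton_self (c : 𝕜) :
    adjoint (toSpanSingleton 𝕜 c) = toSpanSingleton 𝕜 (star c) := by
  refine ((eq_adjoint_iff _ _).mpr fun v w ↦ ?_).symm
  simp [mul_assoc, mul_comm, mul_left_comm]

theorem posSemidef_map_toSpanSingleton {K : Matrix X X 𝕜} (hK : K.PosSemidef) :
    (K.map (toSpanSingleton 𝕜)).PosSemidef := by
  have posSemidef_iff := (RKHS.posSemidef_tfae (K := K.map (toSpanSingleton 𝕜))).out 0 2
  refine posSemidef_iff.mpr ⟨?_, fun f ↦ ?_⟩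
  · exact hK.isHermitian.map _ fun c ↦ (adjoint_toSpanSingleton_self c).symm
  · have inner_eq (x y : X) (a b : 𝕜) :
        ⟪K.map (toSpanSingleton 𝕜) y x a, b⟫_𝕜 = star a * K x y * b := by
      rw [← hK.isHermitian.apply x y]
      simp [mul_comm]
    simpa only [inner_eq] using (RCLike.nonneg_iff.mp (hK.2 f)).1

section RKHS

variable (H : Type*) [NormedAddCommGroup H] [InnerProductSpace 𝕜 H] [CompleteSpace H]
  [RKHS 𝕜 H X 𝕜]

theorem gram_kerFun_one :
    gram 𝕜 (fun x ↦ RKHS.kerFun H x 1) = (RKHS.kernel H).map (· 1) := by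
  ext x y
  rw [gram_apply, RKHS.kerFun_inner, RKHS.kerFun_apply]
  simp

theorem dense_span_range_kerFun_one :
    Dense (Submodule.span 𝕜 (Set.range fun x ↦ RKHS.kerFun H x 1) : Set H) := by
  rw [Submodule.dense_iff_topologicalClosure_eq_top, eq_top_iff, ← RKHS.kerFun_dense H]
  refine Submodule.topologicalClosure_mono (Submodule.span_le.mpr ?_)
  rintro _ ⟨x, v, rfl⟩
  have kerFun_eq_smul : RKHS.kerFun H x v = v • RKHS.kerFun H x 1 := by
    rw [← map_smul, smul_eq_mul, mul_one]
  rw [kerFun_eq_smul]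
  exact Submodule.smul_mem _ v (Submodule.subset_span ⟨x, rfl⟩)

end RKHS

end ScalarKernel

open scoped ComplexOrder in
theorem moore_aronszajn_existence_general.{u, v} {𝕜 : Type u} [RCLike 𝕜] {X : Type v}
    {K : Matrix X X 𝕜} (hK : K.PosSemidef) :
    ∃ (H : Type (max u v)) (_ : NormedAddCommGroup H) (_ : InnerProductSpace 𝕜 H)
      (_ : CompleteSpace H) (φ : X → H),
      gram 𝕜 φ = K ∧ Dense (Submodule.span 𝕜 (Set.range φ) : Set H) := by
  let M := K.map (ContinuousLinearMap.toSpanSingleton 𝕜)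
  have : Fact M.PosSemidef := ⟨posSemidef_map_toSpanSingleton hK⟩
  refine ⟨RKHS.OfKernel M, inferInstance, inferInstance, inferInstance,
    fun x ↦ RKHS.kerFun _ x 1, ?_, dense_span_range_kerFun_one _⟩
  rw [gram_kerFun_one, RKHS.OfKernel.kernel_ofKernel]
  ext x y
  simp [M]

/-- **Moore–Aronszajn theorem (existence).** Every kernel function (symmetric,
positive semi-definite) on a nonempty set `X` is realized as the inner product of a
feature map `φ : X → H` into a real Hilbert space `H`, whose range has dense span. -/
theorem moore_aronszajn_existence {X : Type} [Nonempty X] (K : X → X → ℝ)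
    (hsymm : ∀ x y : X, K x y = K y x)
    (hpsd : ∀ (m : ℕ), 1 ≤ m → ∀ (a : Fin m → ℝ) (x : Fin m → X),
      0 ≤ ∑ i, ∑ j, a i * a j * K (x i) (x j)) :
    ∃ (H : Type) (_ : NormedAddCommGroup H) (_ : InnerProductSpace ℝ H)
      (_ : CompleteSpace H) (φ : X → H),
      (∀ x y : X, K x y = ⟪φ y, φ x⟫) ∧
      Dense (Submodule.span ℝ (Set.range φ) : Set H) := by
  have hK : (of K).PosSemidef :=
    posSemidef_of_fin_sum_nonneg (IsHermitian.ext fun x y ↦ hsymm y x) fun m hm a x ↦ by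
      simpa [mul_right_comm] using hpsd m hm a x
  obtain ⟨H, _, _, _, φ, hgram, hdense⟩ := moore_aronszajn_existence_general hK
  exact ⟨H, inferInstance, inferInstance, inferInstance, φ,
    fun x y ↦ (hsymm x y).trans (congrFun₂ hgram y x).symm, hdense⟩
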